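/- Let U be the product of a canonical form with T-count n ≥ 1, whose leftmost T-gate block has Clifford prefix M ∈ ℒℳ, and whose final Clifford element is C ∈ 𝒞. Then ρ_{2n}(Û₊₊) = ρ₀(M̂₊₊)·J₂·ρ₀(Ĉ₊₊) and ρ_{2n+1}(Û₋₊) = ρ₀(M̂₋₋)·J₁·ρ₀(Ĉ₊₊), where J₂ (respectively J₁) is the 4×4 matrix over ℤ/3ℤ whose (i,j) entry is 2 (respectively 1) when both i,j ∈ {2,3,4} and is 0 otherwise. -/

import Mathlib

open Matrix Complex

noncomputable section

/-- ω = exp(2πi/3), a primitive third root of unity. -/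
def ω : ℂ := exp (2 * Real.pi * I / 3)

/-- ζ = exp(2πi/9), a primitive ninth root of unity. -/
def ζ : ℂ := exp (2 * Real.pi * I / 9)

/-- The qutrit Pauli X matrix. -/
def Xmat : Matrix (Fin 3) (Fin 3) ℂ := !![0,0,1; 1,0,0; 0,1,0]

/-- The qutrit Pauli Z matrix. -/
def Zmat : Matrix (Fin 3) (Fin 3) ℂ := !![1,0,0; 0,ω,0; 0,0,ω^2]

/-- The qutrit Hadamard matrix H = (1/(i√3))·[[1,1,1],[1,ω,ω²],[1,ω²,ω]]. -/
def Hmat : Matrix (Fin 3) (Fin 3) ℂ :=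
  (I * (Real.sqrt 3 : ℂ))⁻¹ • !![1,1,1; 1,ω,ω^2; 1,ω^2,ω]

/-- The qutrit phase matrix S = ζ⁸·diag(1,1,ω). -/
def Smat : Matrix (Fin 3) (Fin 3) ℂ := ζ^8 • !![1,0,0; 0,1,0; 0,0,ω]

/-- The qutrit T matrix T = diag(1,ζ,ζ⁸). -/
def Tmat : Matrix (Fin 3) (Fin 3) ℂ := !![1,0,0; 0,ζ,0; 0,0,ζ^8]

lemma omega_ne_zero : ω ≠ 0 := Complex.exp_ne_zero _
lemma zeta_ne_zero : ζ ≠ 0 := Complex.exp_ne_zero _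

lemma omega_im_pos : 0 < ω.im := by
  have h : ω = Complex.exp ((2 * Real.pi / 3 : ℝ) * I) := by
    rw [ω]; push_cast; ring_nf
  rw [h, Complex.exp_ofReal_mul_I_im]
  apply Real.sin_pos_of_pos_of_lt_pi
  · positivity
  · nlinarith [Real.pi_pos]

lemma omega_ne_one : ω ≠ 1 := by
  intro h
  have := omega_im_pos
  rw [h] at this
  simp at this

lemma omega_cube : ω ^ 3 = 1 := by
  rw [ω, ← Complex.exp_nat_mul]
  rw [show (3:ℕ) * (2 * Real.pi * I / 3) = 2 * Real.pi * I by push_cast; ring]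
  exact Complex.exp_two_pi_mul_I

lemma detX : Xmat.det ≠ 0 := by
  simp [Xmat, Matrix.det_fin_three]

lemma detZ : Zmat.det ≠ 0 := by
  simp [Zmat, Matrix.det_fin_three, omega_ne_zero]

lemma detS : Smat.det ≠ 0 := by
  simp [Smat, Matrix.det_fin_three, omega_ne_zero, zeta_ne_zero]

lemma detT : Tmat.det ≠ 0 := by
  simp [Tmat, Matrix.det_fin_three, zeta_ne_zero]

lemma detH : Hmat.det ≠ 0 := by
  rw [Hmat, Matrix.det_smul]
  apply mul_ne_zero
  · apply pow_ne_zero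
    apply inv_ne_zero
    apply mul_ne_zero Complex.I_ne_zero
    simp [Complex.ofReal_ne_zero]
  · rw [Matrix.det_fin_three]
    simp [Matrix.vecHead, Matrix.vecTail]
    intro h
    have h3 : ω ^ 3 = 1 := omega_cube
    have key : 3 * ω * (ω - 1) = 0 := by linear_combination h + ω * h3
    rcases mul_eq_zero.mp key with h' | h'
    · rcases mul_eq_zero.mp h' with h'' | h''
      · norm_num at h''
      · exact omega_ne_zero h''
    · exact omega_ne_one (by linear_combination h')

/-- X as an element of GL(3, ℂ). -/
def Xg : GL (Fin 3) ℂ := Matrix.GeneralLinearGroup.mkOfDetNeZero Xmat detX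

/-- Z as an element of GL(3, ℂ). -/
def Zg : GL (Fin 3) ℂ := Matrix.GeneralLinearGroup.mkOfDetNeZero Zmat detZ

/-- H as an element of GL(3, ℂ). -/
def Hg : GL (Fin 3) ℂ := Matrix.GeneralLinearGroup.mkOfDetNeZero Hmat detH

/-- S as an element of GL(3, ℂ). -/
def Sg : GL (Fin 3) ℂ := Matrix.GeneralLinearGroup.mkOfDetNeZero Smat detS

/-- T as an element of GL(3, ℂ). -/
def Tg : GL (Fin 3) ℂ := Matrix.GeneralLinearGroup.mkOfDetNeZero Tmat detT

/-- The Clifford group 𝒞: the subgroup of GL(3,ℂ) generated by H and S. -/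
def Cliff : Subgroup (GL (Fin 3) ℂ) := Subgroup.closure {Hg, Sg}

/-- The Clifford+T group: the subgroup of GL(3,ℂ) generated by H, S and T. -/
def CliffT : Subgroup (GL (Fin 3) ℂ) := Subgroup.closure {Hg, Sg, Tg}

/-- The subgroup 𝒮 of GL(3,ℂ) generated by S and X. -/
def Sgrp : Subgroup (GL (Fin 3) ℂ) := Subgroup.closure {Sg, Xg}

/-- Letters of words over the alphabet {H, S, T}. -/
inductive Letter : Type
  | H : Letter
  | S : Letter
  | T : Letter
  deriving DecidableEq

/-- The gate associated to a letter. -/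
def Letter.g : Letter → GL (Fin 3) ℂ
  | .H => Hg
  | .S => Sg
  | .T => Tg

/-- The product of the letters of a word. -/
def wordProd (w : List Letter) : GL (Fin 3) ℂ := (w.map Letter.g).prod

/-- The allowed prefixes of a canonical form: ε, T, H²T. -/
def Prefixes : Set (List Letter) := {[], [.T], [.H, .H, .T]}

/-- The allowed syllables of a canonical form: HT, H³T, SHT, SH³T, S²HT, S²H³T. -/
def Syllables : Set (List Letter) :=
  {[.H, .T], [.H, .H, .H, .T], [.S, .H, .T],
   [.S, .H, .H, .H, .T], [.S, .S, .H, .T], [.S, .S, .H, .H, .H, .T]}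

/-- The T-count of a canonical form with prefix `p` and syllable list `ss`:
`k` if the prefix is empty and `k+1` otherwise, where `k` is the number of syllables. -/
def TCount (p : List Letter) (ss : List (List Letter)) : ℕ :=
  ss.length + (if p = [] then 0 else 1)

/-- P₊ = (P + P²)/√6. -/
def Pplus (P : Matrix (Fin 3) (Fin 3) ℂ) : Matrix (Fin 3) (Fin 3) ℂ :=
  ((Real.sqrt 6 : ℂ))⁻¹ • (P + P ^ 2)

/-- P₋ = i(P − P²)/√6. -/
def Pminus (P : Matrix (Fin 3) (Fin 3) ℂ) : Matrix (Fin 3) (Fin 3) ℂ :=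
  (I * ((Real.sqrt 6 : ℂ))⁻¹) • (P - P ^ 2)

/-- The ordered tuple (Q₁, …, Q₈) = (Z₊, X₊, (XZ)₊, (XZ²)₊, Z₋, X₋, (XZ)₋, (XZ²)₋). -/
def Q : Fin 8 → Matrix (Fin 3) (Fin 3) ℂ :=
  ![Pplus Zmat, Pplus Xmat, Pplus (Xmat * Zmat), Pplus (Xmat * Zmat ^ 2),
    Pminus Zmat, Pminus Xmat, Pminus (Xmat * Zmat), Pminus (Xmat * Zmat ^ 2)]

/-- The adjoint representation Û of U, the 8×8 real matrix with
entries Û_{ij} = tr(Qᵢ U Qⱼ U†). -/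
def adj (U : Matrix (Fin 3) (Fin 3) ℂ) : Matrix (Fin 8) (Fin 8) ℝ :=
  Matrix.of fun i j => (Matrix.trace (Q i * U * Q j * Uᴴ)).re

/-- The top-left 4×4 quadrant Û₊₊. -/
def blockPP (A : Matrix (Fin 8) (Fin 8) ℝ) : Matrix (Fin 4) (Fin 4) ℝ :=
  Matrix.of fun i j => A ⟨i.val, by omega⟩ ⟨j.val, by omega⟩

/-- The top-right 4×4 quadrant Û₊₋. -/
def blockPM (A : Matrix (Fin 8) (Fin 8) ℝ) : Matrix (Fin 4) (Fin 4) ℝ :=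
  Matrix.of fun i j => A ⟨i.val, by omega⟩ ⟨j.val + 4, by omega⟩

/-- The bottom-left 4×4 quadrant Û₋₊. -/
def blockMP (A : Matrix (Fin 8) (Fin 8) ℝ) : Matrix (Fin 4) (Fin 4) ℝ :=
  Matrix.of fun i j => A ⟨i.val + 4, by omega⟩ ⟨j.val, by omega⟩

/-- The bottom-right 4×4 quadrant Û₋₋. -/
def blockMM (A : Matrix (Fin 8) (Fin 8) ℝ) : Matrix (Fin 4) (Fin 4) ℝ :=
  Matrix.of fun i j => A ⟨i.val + 4, by omega⟩ ⟨j.val + 4, by omega⟩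

/-- α = sin(2π/9). -/
def αR : ℝ := Real.sin (2 * Real.pi / 9)

/-- The ring ℤ[α]: the subring of ℝ generated by 1/2 and α. -/
def Zα : Subring ℝ := Subring.closure {1/2, αR}

/-- The ring ℤ[1/2, 1/α]: the subring of ℝ generated by 1/2, α and α⁻¹. -/
def Zhα : Subring ℝ := Subring.closure {1/2, αR, αR⁻¹}

lemma alpha_mem_Zα : αR ∈ Zα := Subring.subset_closure (by simp)

/-- The set ℒℳ = {I, H, H², H³, SH, SH³, S²H, S²H³} of Clifford operators. -/
def LMset : Set (GL (Fin 3) ℂ) :=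
  {1, Hg, Hg ^ 2, Hg ^ 3, Sg * Hg, Sg * Hg ^ 3, Sg ^ 2 * Hg, Sg ^ 2 * Hg ^ 3}

/-- The residue ρ_k of a real number x (with ρ : ℤ[α] → ℤ/3ℤ the residue map):
ρ(α^k·x) when α^k·x ∈ ℤ[α], and junk value 0 otherwise. -/
def resEntry (ρ : Zα →+* ZMod 3) (k : ℕ) (x : ℝ) : ZMod 3 :=
  @dite _ (αR ^ k * x ∈ Zα) (Classical.dec _) (fun h => ρ (⟨αR ^ k * x, h⟩ : Zα)) (fun _ => 0)

/-- The k-residue ρ_k of a 4×4 real matrix, computed entrywise. -/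
def resMat (ρ : Zα →+* ZMod 3) (k : ℕ) (A : Matrix (Fin 4) (Fin 4) ℝ) :
    Matrix (Fin 4) (Fin 4) (ZMod 3) :=
  Matrix.of fun i j => resEntry ρ k (A i j)

/-- The matrix J₁ over ℤ/3ℤ with (i,j) entry 1 when i,j ∈ {2,3,4} and 0 otherwise. -/
def J1 : Matrix (Fin 4) (Fin 4) (ZMod 3) :=
  Matrix.of fun i j => if i ≠ 0 ∧ j ≠ 0 then 1 else 0

/-- The matrix J₂ over ℤ/3ℤ with (i,j) entry 2 when i,j ∈ {2,3,4} and 0 otherwise. -/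
def J2 : Matrix (Fin 4) (Fin 4) (ZMod 3) :=
  Matrix.of fun i j => if i ≠ 0 ∧ j ≠ 0 then 2 else 0

/-!
Clifford operators act on the span of the `Qᵢ` by matrices over `ℤ[α]` whose off-diagonal blocks
are divisible by `√3`, hence by `α`. There is a `ℤ[α]`-lattice, containing `Q₁, …, Q₄` and their
images under Clifford operators and contained in the span of `Q₁, …, Q₄, α⁻¹Q₅, …, α⁻¹Q₈`, that
`Ŝ`, `Ĥ` and `α²T̂` all preserve, so a word in `H`, `S`, `T` with `n` letters `T` acts on it
integrally after scaling by `α²ⁿ`. Modulo `α` the action of `α²T̂`, read off in rows scaled by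
`diag(1, α)`, is a matrix `τ` with blocks `J₂` and `J₁`, and `τ` absorbs every syllable from the
right: `τ·ŝ ≡ τ`. Therefore only the leftmost Clifford prefix `M` and the final Clifford `C`
contribute to the residue `M̂·τ·Ĉ`.
-/

/-! ### Trigonometry of the angle 2π/9 -/

/-- The parameter `β = 4 sin²(2π/9)` of the subring of even polynomials in `α`, in which the
identities below have small coefficients. -/
def βR : ℝ := 4 * αR ^ 2

lemma alphaR_ne_zero : αR ≠ 0 :=
  (Real.sin_pos_of_pos_of_lt_pi (by positivity) (by linarith [Real.pi_pos])).ne'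

lemma sqrt_three_eq : √3 = 2 * αR * (3 - βR) := by
  have h_triple := Real.sin_three_mul (2 * Real.pi / 9)
  rw [show 3 * (2 * Real.pi / 9) = Real.pi - Real.pi / 3 by ring, Real.sin_pi_sub,
    Real.sin_pi_div_three] at h_triple
  rw [βR, αR]
  linear_combination 2 * h_triple

lemma betaR_cubic : βR ^ 3 - 6 * βR ^ 2 + 9 * βR - 3 = 0 := by
  have h_sq : √3 ^ 2 = 3 := Real.sq_sqrt (by norm_num)
  rw [sqrt_three_eq] at h_sq
  have h_beta : βR = 4 * αR ^ 2 := rfl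
  linear_combination h_sq + (3 - βR) ^ 2 * h_beta

lemma cos_two_pi_div_nine : Real.cos (2 * Real.pi / 9) = -2 + 5 / 2 * βR - βR ^ 2 / 2 := by
  have h_triple := Real.cos_three_mul (2 * Real.pi / 9)
  rw [show 3 * (2 * Real.pi / 9) = Real.pi - Real.pi / 3 by ring, Real.cos_pi_sub,
    Real.cos_pi_div_three] at h_triple
  have h_sq : 4 * Real.cos (2 * Real.pi / 9) ^ 2 = 4 - βR := by
    rw [Real.cos_sq', βR, αR]; ring
  -- The triple angle formula reads `cos (2π/9) * (1 - β) = -1/2`, and `1 - β` is a unit.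
  grind [betaR_cubic]

lemma zeta_eq_exp_mul_I : ζ = exp ((2 * Real.pi / 9 : ℝ) * I) := by
  rw [ζ]
  push_cast
  ring_nf

lemma zeta_re : ζ.re = -2 + 5 / 2 * βR - βR ^ 2 / 2 := by
  rw [zeta_eq_exp_mul_I, Complex.exp_ofReal_mul_I_re, cos_two_pi_div_nine]

lemma zeta_im : ζ.im = αR := by
  rw [zeta_eq_exp_mul_I, Complex.exp_ofReal_mul_I_im, αR]

lemma zeta_cube : ζ ^ 3 = ω := by
  rw [ζ, ω, ← Complex.exp_nat_mul]
  push_cast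
  ring_nf

lemma omega_eq_exp_mul_I : ω = exp ((Real.pi - Real.pi / 3 : ℝ) * I) := by
  rw [ω]
  push_cast
  ring_nf

lemma omega_re : ω.re = -1 / 2 := by
  rw [omega_eq_exp_mul_I, Complex.exp_ofReal_mul_I_re, Real.cos_pi_sub, Real.cos_pi_div_three,
    neg_div]

lemma omega_im : ω.im = √3 / 2 := by
  rw [omega_eq_exp_mul_I, Complex.exp_ofReal_mul_I_im, Real.sin_pi_sub, Real.sin_pi_div_three]

lemma one_add_omega_add_omega_sq : 1 + ω + ω ^ 2 = 0 :=
  (mul_eq_zero.mp (by linear_combination omega_cube : (ω - 1) * (1 + ω + ω ^ 2) = 0)).resolve_left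
    (sub_ne_zero.mpr omega_ne_one)

lemma zeta_pow_nine : ζ ^ 9 = 1 := by
  rw [show 9 = 3 * 3 from rfl, pow_mul, zeta_cube, omega_cube]

lemma conj_zeta : (starRingEnd ℂ) ζ = ζ ^ 8 := by
  have h_norm : (starRingEnd ℂ) ζ * ζ = 1 := by
    rw [Complex.conj_mul', Complex.norm_eq_one_of_pow_eq_one zeta_pow_nine (by norm_num),
      Complex.ofReal_one, one_pow]
  exact mul_right_cancel₀ zeta_ne_zero (by rw [h_norm, ← pow_succ, zeta_pow_nine])

lemma conj_omega : (starRingEnd ℂ) ω = ω ^ 2 := by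
  rw [← zeta_cube, map_pow, conj_zeta]
  linear_combination (ζ ^ 15 + ζ ^ 6) * zeta_pow_nine

/-! ### The adjoint representation in block form -/

/-- The Pauli operators `Z, X, XZ, XZ²`, one for each line through the origin of `𝔽₃²`. -/
def pauli : Fin 4 → Matrix (Fin 3) (Fin 3) ℂ :=
  ![Zmat, Xmat, Xmat * Zmat, Xmat * Zmat ^ 2]

/-- The operators `Q₁, …, Q₈`, indexed so that the `P₊` form the first summand and the `P₋` the
second. -/
def adjBasis : Fin 4 ⊕ Fin 4 → Matrix (Fin 3) (Fin 3) ℂ :=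
  Sum.elim (fun i => Pplus (pauli i)) (fun i => Pminus (pauli i))

lemma pauli_sq (i : Fin 4) : pauli i ^ 2 = (pauli i)ᴴ := by
  have h_omega := omega_cube
  ext j k
  fin_cases i <;> fin_cases j <;> fin_cases k <;>
    simp [pauli, Xmat, Zmat, pow_two, Matrix.mul_apply, Fin.sum_univ_three, conj_omega] <;> grind

lemma trace_pauli_mul_pauli (i j : Fin 4) : (pauli i * pauli j).trace = 0 := by
  have h_sum := one_add_omega_add_omega_sq
  fin_cases i <;> fin_cases j <;>
    simp [pauli, Xmat, Zmat, pow_two, Matrix.trace_fin_three]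
  grind

lemma trace_pauli_mul_pauli_sq (i j : Fin 4) :
    (pauli i * pauli j ^ 2).trace = if i = j then 3 else 0 := by
  have h_sum := one_add_omega_add_omega_sq
  fin_cases i <;> fin_cases j <;>
    simp [pauli, Xmat, Zmat, pow_two, Matrix.trace_fin_three] <;> grind

lemma trace_pauli_sq_mul_pauli (i j : Fin 4) :
    (pauli i ^ 2 * pauli j).trace = if i = j then 3 else 0 := by
  rw [Matrix.trace_mul_comm, trace_pauli_mul_pauli_sq]
  simp only [eq_comm]

lemma trace_pauli_sq_mul_pauli_sq (i j : Fin 4) : (pauli i ^ 2 * pauli j ^ 2).trace = 0 := by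
  rw [pauli_sq, pauli_sq, ← Matrix.conjTranspose_mul, Matrix.trace_conjTranspose,
    trace_pauli_mul_pauli, star_zero]

lemma inv_sqrt_six_sq : ((√6 : ℂ))⁻¹ ^ 2 = 1 / 6 := by
  rw [inv_pow, ← Complex.ofReal_pow, Real.sq_sqrt (by norm_num)]
  norm_num

lemma trace_adjBasis_mul (i j : Fin 4 ⊕ Fin 4) :
    (adjBasis i * adjBasis j).trace = if i = j then 1 else 0 := by
  have h_six := inv_sqrt_six_sq
  have h_I := Complex.I_sq
  rcases i with i | i <;> rcases j with j | j <;>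
    simp only [adjBasis, Sum.elim_inl, Sum.elim_inr, Pplus, Pminus, Matrix.smul_mul,
      Matrix.mul_smul, Matrix.add_mul, Matrix.mul_add, Matrix.sub_mul, Matrix.mul_sub,
      Matrix.trace_smul, Matrix.trace_add, Matrix.trace_sub, trace_pauli_mul_pauli,
      trace_pauli_mul_pauli_sq, trace_pauli_sq_mul_pauli, trace_pauli_sq_mul_pauli_sq,
      smul_eq_mul, Sum.inl.injEq, Sum.inr.injEq, reduceCtorEq, if_false] <;>
    grind

lemma Q_eq_adjBasis_inl (i : Fin 4) : Q ⟨i.val, by omega⟩ = adjBasis (Sum.inl i) := by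
  fin_cases i <;> rfl

lemma Q_eq_adjBasis_inr (i : Fin 4) : Q ⟨i.val + 4, by omega⟩ = adjBasis (Sum.inr i) := by
  fin_cases i <;> rfl

lemma smul_add_star_smul_sq (w : ℂ) (P : Matrix (Fin 3) (Fin 3) ℂ) :
    (√6 : ℂ)⁻¹ • (w • P + star w • P ^ 2) = (w.re : ℂ) • Pplus P + (w.im : ℂ) • Pminus P := by
  have h_star : star w = w.re - w.im * I := by
    apply Complex.ext <;> simp
  rw [Pplus, Pminus, h_star]
  nth_rewrite 1 [← Complex.re_add_im w]
  module

/-- `IsAdjRep U A` says that `U` is unitary and that conjugation by `U` acts on the span of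
`adjBasis` through the real matrix `A`; it is `Û`, re-indexed by `Fin 4 ⊕ Fin 4`. -/
structure IsAdjRep (U : Matrix (Fin 3) (Fin 3) ℂ)
    (A : Matrix (Fin 4 ⊕ Fin 4) (Fin 4 ⊕ Fin 4) ℝ) : Prop where
  mem_unitaryGroup : U ∈ Matrix.unitaryGroup (Fin 3) ℂ
  conj_eq : ∀ j, U * adjBasis j * Uᴴ = ∑ i, (A i j : ℂ) • adjBasis i

namespace IsAdjRep

variable {U V : Matrix (Fin 3) (Fin 3) ℂ} {A A' : Matrix (Fin 4 ⊕ Fin 4) (Fin 4 ⊕ Fin 4) ℝ}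

lemma one : IsAdjRep 1 1 where
  mem_unitaryGroup := one_mem _
  conj_eq j := by simp [Matrix.one_apply, apply_ite Complex.ofReal, ite_smul]

lemma mul (hU : IsAdjRep U A) (hV : IsAdjRep V A') : IsAdjRep (U * V) (A * A') where
  mem_unitaryGroup := mul_mem hU.mem_unitaryGroup hV.mem_unitaryGroup
  conj_eq j := calc
    U * V * adjBasis j * (U * V)ᴴ = U * (V * adjBasis j * Vᴴ) * Uᴴ := by
      simp only [Matrix.conjTranspose_mul, Matrix.mul_assoc]
    _ = ∑ k, (A' k j : ℂ) • ∑ i, (A i k : ℂ) • adjBasis i := by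
      simp only [hV.conj_eq, Matrix.mul_sum, Matrix.sum_mul, Matrix.mul_smul, Matrix.smul_mul,
        hU.conj_eq]
    _ = ∑ i, ((A * A') i j : ℂ) • adjBasis i := by
      simp only [Finset.smul_sum, smul_smul]
      rw [Finset.sum_comm]
      simp only [Matrix.mul_apply, Complex.ofReal_sum, Complex.ofReal_mul, Finset.sum_smul,
        mul_comm]

lemma conjTranspose_mul_self (hU : IsAdjRep U A) : Uᴴ * U = 1 :=
  Matrix.mem_unitaryGroup_iff'.mp hU.mem_unitaryGroup

lemma trace_eq (hU : IsAdjRep U A) (i j : Fin 4 ⊕ Fin 4) :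
    (adjBasis i * (U * adjBasis j * Uᴴ)).trace = A i j := by
  simp only [hU.conj_eq, Matrix.mul_sum, Matrix.trace_sum, Matrix.mul_smul, Matrix.trace_smul,
    trace_adjBasis_mul, smul_eq_mul, mul_ite, mul_one, mul_zero, Finset.sum_ite_eq,
    Finset.mem_univ, if_true]

lemma transpose_mul_self (hU : IsAdjRep U A) : Aᵀ * A = 1 := by
  ext i j
  have h_entry : ((Aᵀ * A) i j : ℂ) = if i = j then 1 else 0 := calc
    ((Aᵀ * A) i j : ℂ) = ((∑ k, (A k i : ℂ) • adjBasis k) * (U * adjBasis j * Uᴴ)).trace := by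
      simp only [Matrix.sum_mul, Matrix.smul_mul, Matrix.trace_sum, Matrix.trace_smul,
        hU.trace_eq, Matrix.mul_apply, Matrix.transpose_apply, smul_eq_mul, Complex.ofReal_sum,
        Complex.ofReal_mul]
    _ = (U * adjBasis i * (Uᴴ * U) * (adjBasis j * Uᴴ)).trace := by
      simp only [← hU.conj_eq, Matrix.mul_assoc]
    _ = (U * (adjBasis i * adjBasis j * Uᴴ)).trace := by
      simp only [hU.conjTranspose_mul_self, Matrix.mul_one, Matrix.mul_assoc]
    _ = if i = j then 1 else 0 := by
      rw [Matrix.trace_mul_comm, Matrix.mul_assoc, hU.conjTranspose_mul_self, Matrix.mul_one,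
        trace_adjBasis_mul]
  apply Complex.ofReal_injective
  rw [h_entry, Matrix.one_apply, apply_ite Complex.ofReal, Complex.ofReal_one, Complex.ofReal_zero]

lemma conjTranspose (hU : IsAdjRep U A) : IsAdjRep Uᴴ Aᵀ where
  mem_unitaryGroup := Unitary.star_mem hU.mem_unitaryGroup
  conj_eq j := by
    have h_orth : A * Aᵀ = 1 := mul_eq_one_comm.mp hU.transpose_mul_self
    have h_basis : adjBasis j = ∑ i, (A j i : ℂ) • (U * adjBasis i * Uᴴ) := calc
      adjBasis j = ∑ k, ((A * Aᵀ) k j : ℂ) • adjBasis k := by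
        simp [h_orth, -Fintype.sum_sum_type, Matrix.one_apply, apply_ite Complex.ofReal, ite_smul]
      _ = ∑ i, (A j i : ℂ) • (U * adjBasis i * Uᴴ) := by
        simp only [hU.conj_eq, Finset.smul_sum, smul_smul]
        rw [Finset.sum_comm]
        simp only [Matrix.mul_apply, Matrix.transpose_apply, Complex.ofReal_sum,
          Complex.ofReal_mul, Finset.sum_smul, mul_comm]
    have h_cancel (q : Matrix (Fin 3) (Fin 3) ℂ) : Uᴴ * (U * q * Uᴴ) * U = q := by
      grind [hU.conjTranspose_mul_self]
    nth_rewrite 1 [h_basis]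
    simp only [Matrix.conjTranspose_conjTranspose, Matrix.mul_sum, Matrix.sum_mul,
      Matrix.mul_smul, Matrix.smul_mul, h_cancel, Matrix.transpose_apply]

lemma adj_apply (hU : IsAdjRep U A) {i j : Fin 8} {i' j' : Fin 4 ⊕ Fin 4}
    (hi : Q i = adjBasis i') (hj : Q j = adjBasis j') : adj U i j = A i' j' := by
  rw [adj, Matrix.of_apply, hi, hj, Matrix.mul_assoc (_ * _), Matrix.mul_assoc,
    ← Matrix.mul_assoc U, hU.trace_eq, Complex.ofReal_re]

lemma blockPP_adj (hU : IsAdjRep U A) : blockPP (adj U) = A.toBlocks₁₁ :=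
  Matrix.ext fun i j => hU.adj_apply (Q_eq_adjBasis_inl i) (Q_eq_adjBasis_inl j)

lemma blockMP_adj (hU : IsAdjRep U A) : blockMP (adj U) = A.toBlocks₂₁ :=
  Matrix.ext fun i j => hU.adj_apply (Q_eq_adjBasis_inr i) (Q_eq_adjBasis_inl j)

lemma blockMM_adj (hU : IsAdjRep U A) : blockMM (adj U) = A.toBlocks₂₂ :=
  Matrix.ext fun i j => hU.adj_apply (Q_eq_adjBasis_inr i) (Q_eq_adjBasis_inr j)

lemma of_mul_pauli (hU : U ∈ Matrix.unitaryGroup (Fin 3) ℂ) (d e : Matrix (Fin 4) (Fin 4) ℂ)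
    (h : ∀ j, U * pauli j = (∑ i, (d i j • pauli i + e i j • pauli i ^ 2)) * U) :
    IsAdjRep U (fromBlocks ((d + e).map re) (-(d + e).map im)
      ((d - e).map im) ((d - e).map re)) where
  mem_unitaryGroup := hU
  conj_eq j := by
    have h_conj (j) : U * pauli j * Uᴴ = ∑ i, (d i j • pauli i + e i j • pauli i ^ 2) := by
      rw [h, Matrix.mul_assoc, ← Matrix.star_eq_conjTranspose, Unitary.mul_star_self_of_mem hU,
        Matrix.mul_one]
    have h_conj_sq (j) : U * pauli j ^ 2 * Uᴴ =
        ∑ i, (star (e i j) • pauli i + star (d i j) • pauli i ^ 2) := by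
      have h_adjoint := congrArg Matrix.conjTranspose (h_conj j)
      simp only [pauli_sq, Matrix.conjTranspose_mul, Matrix.conjTranspose_conjTranspose,
        Matrix.conjTranspose_sum, Matrix.conjTranspose_add, Matrix.conjTranspose_smul]
        at h_adjoint
      simp only [pauli_sq, Matrix.mul_assoc, h_adjoint, add_comm]
    rcases j with j | j
    · calc
        U * Pplus (pauli j) * Uᴴ = (√6 : ℂ)⁻¹ • (U * pauli j * Uᴴ + U * pauli j ^ 2 * Uᴴ) := by
          simp only [Pplus, Matrix.mul_smul, Matrix.smul_mul, Matrix.mul_add, Matrix.add_mul]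
        _ = ∑ i, (√6 : ℂ)⁻¹ • ((d i j + star (e i j)) • pauli i +
              star (d i j + star (e i j)) • pauli i ^ 2) := by
          simp only [h_conj, h_conj_sq, ← Finset.sum_add_distrib, Finset.smul_sum, star_add,
            star_star]
          refine Finset.sum_congr rfl fun i _ => ?_
          module
        _ = _ := by
          simp only [smul_add_star_smul_sq, Finset.sum_add_distrib]
          simp only [adjBasis, Fintype.sum_sum_type, Sum.elim_inl, Sum.elim_inr,
            fromBlocks_apply₁₁, fromBlocks_apply₂₁, Matrix.map_apply, Matrix.add_apply,
            Matrix.sub_apply, Complex.add_re, Complex.add_im, Complex.sub_im, Complex.star_def,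
            Complex.conj_re, Complex.conj_im, ← sub_eq_add_neg]
    · calc
        U * Pminus (pauli j) * Uᴴ =
            (I * (√6 : ℂ)⁻¹) • (U * pauli j * Uᴴ - U * pauli j ^ 2 * Uᴴ) := by
          simp only [Pminus, Matrix.mul_smul, Matrix.smul_mul, Matrix.mul_sub, Matrix.sub_mul]
        _ = ∑ i, (√6 : ℂ)⁻¹ • ((I * (d i j - star (e i j))) • pauli i +
              star (I * (d i j - star (e i j))) • pauli i ^ 2) := by
          simp only [h_conj, h_conj_sq, ← Finset.sum_sub_distrib, Finset.smul_sum, star_mul',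
            star_sub, Complex.star_def, Complex.conj_I, Complex.conj_conj]
          refine Finset.sum_congr rfl fun i _ => ?_
          module
        _ = _ := by
          simp only [smul_add_star_smul_sq, Finset.sum_add_distrib]
          simp only [adjBasis, Fintype.sum_sum_type, Sum.elim_inl, Sum.elim_inr,
            fromBlocks_apply₁₂, fromBlocks_apply₂₂, Matrix.map_apply, Matrix.add_apply,
            Matrix.sub_apply, Matrix.neg_apply, Complex.I_mul_re,
            Complex.I_mul_im, Complex.add_im, Complex.sub_re, Complex.sub_im, Complex.star_def,
            Complex.conj_re, Complex.conj_im, sub_neg_eq_add]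

end IsAdjRep

/-! ### The gates `S`, `H`, `T` -/

lemma Smat_mem_unitaryGroup : Smat ∈ Matrix.unitaryGroup (Fin 3) ℂ := by
  have h_zeta := zeta_pow_nine
  have h_omega := omega_cube
  rw [Matrix.mem_unitaryGroup_iff]
  simp [← Matrix.ext_iff, Fin.forall_fin_succ, Smat, Matrix.vecMul, dotProduct, Fin.sum_univ_three,
    conj_omega, conj_zeta]
  grind

lemma Tmat_mem_unitaryGroup : Tmat ∈ Matrix.unitaryGroup (Fin 3) ℂ := by
  have h_zeta := zeta_pow_nine
  rw [Matrix.mem_unitaryGroup_iff]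
  simp [← Matrix.ext_iff, Fin.forall_fin_succ, Tmat, Matrix.vecMul, dotProduct, Fin.sum_univ_three,
    conj_zeta]
  grind

lemma Hmat_mem_unitaryGroup : Hmat ∈ Matrix.unitaryGroup (Fin 3) ℂ := by
  have h_sum := one_add_omega_add_omega_sq
  have h_omega := omega_cube
  have h_scalar : (I * (√3 : ℂ))⁻¹ * star (I * (√3 : ℂ))⁻¹ = 1 / 3 := by
    rw [Complex.star_def, Complex.mul_conj', norm_inv, norm_mul, Complex.norm_I, one_mul,
      Complex.norm_real, Real.norm_of_nonneg (Real.sqrt_nonneg 3), ← Complex.ofReal_pow, inv_pow,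
      Real.sq_sqrt (by norm_num)]
    norm_num
  rw [Matrix.mem_unitaryGroup_iff, Hmat, star_smul, Matrix.smul_mul, Matrix.mul_smul, smul_smul,
    h_scalar]
  simp [← Matrix.ext_iff, Fin.forall_fin_succ, Matrix.vecMul, dotProduct, Fin.sum_univ_three,
    conj_omega]
  grind

lemma isAdjRep_S : IsAdjRep Smat (fromBlocks
    !![1, 0, 0, 0; 0, 0, 0, 1; 0, 1, 0, 0; 0, 0, 1, 0] 0 0
    !![1, 0, 0, 0; 0, 0, 0, 1; 0, 1, 0, 0; 0, 0, 1, 0]) := by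
  have h_omega := omega_cube
  convert IsAdjRep.of_mul_pauli Smat_mem_unitaryGroup
    !![1, 0, 0, 0; 0, 0, 0, 1; 0, 1, 0, 0; 0, 0, 1, 0] 0 fun j => ?_ using 2
  · simp [← Matrix.ext_iff, Fin.forall_fin_succ]
  · simp [← Matrix.ext_iff, Fin.forall_fin_succ]
  · simp [← Matrix.ext_iff, Fin.forall_fin_succ]
  · simp [← Matrix.ext_iff, Fin.forall_fin_succ]
  · fin_cases j <;>
      simp [pauli, Smat, Xmat, Zmat, pow_two, Fin.sum_univ_four] <;>
      grind

lemma isAdjRep_H : IsAdjRep Hmat (fromBlocks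
    !![0, 1, 0, 0; 1, 0, 0, 0; 0, 0, 0, -1 / 2; 0, 0, 1, 0]
    !![0, 0, 0, 0; 0, 0, 0, 0; 0, 0, 0, -√3 / 2; 0, 0, 0, 0]
    !![0, 0, 0, 0; 0, 0, 0, 0; 0, 0, 0, √3 / 2; 0, 0, 0, 0]
    !![0, 1, 0, 0; -1, 0, 0, 0; 0, 0, 0, -1 / 2; 0, 0, -1, 0]) := by
  have h_omega := omega_cube
  convert IsAdjRep.of_mul_pauli Hmat_mem_unitaryGroup
    !![0, 1, 0, 0; 0, 0, 0, 0; 0, 0, 0, ω; 0, 0, 0, 0]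
    !![0, 0, 0, 0; 1, 0, 0, 0; 0, 0, 0, 0; 0, 0, 1, 0] fun j => ?_ using 2
  · simp [← Matrix.ext_iff, Fin.forall_fin_succ, omega_re]
  · simp [← Matrix.ext_iff, Fin.forall_fin_succ, omega_im, neg_div]
  · simp [← Matrix.ext_iff, Fin.forall_fin_succ, omega_im]
  · simp [← Matrix.ext_iff, Fin.forall_fin_succ, omega_re]
  · rw [Hmat, Matrix.smul_mul, Matrix.mul_smul]
    congr 1
    fin_cases j <;>
      simp [pauli, Xmat, Zmat, pow_two, Fin.sum_univ_four] <;>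
      grind

lemma zeta_mul_omega_re : (ζ * ω).re = 1 - 2 * βR + βR ^ 2 / 2 := by
  have h_beta : βR = 4 * αR ^ 2 := rfl
  rw [Complex.mul_re, zeta_re, zeta_im, omega_re, omega_im, sqrt_three_eq]
  grind [betaR_cubic]

lemma zeta_mul_omega_im : (ζ * ω).im = αR * (-5 + 5 * βR - βR ^ 2) := by
  rw [Complex.mul_im, zeta_re, zeta_im, omega_re, omega_im, sqrt_three_eq]
  grind [betaR_cubic]

/-- The coefficient of `X` and of `XZ²` in `TXT† = tCoeff₀ X + tCoeff₁ XZ + tCoeff₀ XZ²`. -/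
def tCoeff₀ : ℂ := (ζ - ζ * ω) / 3

/-- The coefficient of `XZ` in `TXT† = tCoeff₀ X + tCoeff₁ XZ + tCoeff₀ XZ²`. -/
def tCoeff₁ : ℂ := (ζ + 2 * (ζ * ω)) / 3

lemma tCoeff₀_re : tCoeff₀.re = -1 + 3 / 2 * βR - βR ^ 2 / 3 := by
  rw [tCoeff₀, Complex.div_ofNat_re, Complex.sub_re, zeta_mul_omega_re, zeta_re]
  ring

lemma tCoeff₀_im : tCoeff₀.im = αR * (2 - 5 / 3 * βR + βR ^ 2 / 3) := by
  rw [tCoeff₀, Complex.div_ofNat_im, Complex.sub_im, zeta_mul_omega_im, zeta_im]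
  ring

lemma tCoeff₁_re : tCoeff₁.re = -βR / 2 + βR ^ 2 / 6 := by
  rw [tCoeff₁, Complex.div_ofNat_re, two_mul, Complex.add_re, Complex.add_re, zeta_mul_omega_re,
    zeta_re]
  ring

lemma tCoeff₁_im : tCoeff₁.im = αR * (-3 + 10 / 3 * βR - 2 / 3 * βR ^ 2) := by
  rw [tCoeff₁, Complex.div_ofNat_im, two_mul, Complex.add_im, Complex.add_im, zeta_mul_omega_im,
    zeta_im]
  ring

lemma isAdjRep_T : IsAdjRep Tmat
    (let r₀ := -1 + 3 / 2 * βR - βR ^ 2 / 3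
    let r₁ := -βR / 2 + βR ^ 2 / 6
    let s₀ := αR * (2 - 5 / 3 * βR + βR ^ 2 / 3)
    let s₁ := αR * (-3 + 10 / 3 * βR - 2 / 3 * βR ^ 2)
    fromBlocks !![1, 0, 0, 0; 0, r₀, r₀, r₁; 0, r₁, r₀, r₀; 0, r₀, r₁, r₀]
      !![0, 0, 0, 0; 0, -s₀, -s₀, -s₁; 0, -s₁, -s₀, -s₀; 0, -s₀, -s₁, -s₀]
      !![0, 0, 0, 0; 0, s₀, s₀, s₁; 0, s₁, s₀, s₀; 0, s₀, s₁, s₀]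
      !![1, 0, 0, 0; 0, r₀, r₀, r₁; 0, r₁, r₀, r₀; 0, r₀, r₁, r₀]) := by
  have h_cube := zeta_cube
  have h_sum := one_add_omega_add_omega_sq
  convert IsAdjRep.of_mul_pauli Tmat_mem_unitaryGroup
    (let d₀ := tCoeff₀
    let d₁ := tCoeff₁
    !![1, 0, 0, 0; 0, d₀, d₀, d₁; 0, d₁, d₀, d₀; 0, d₀, d₁, d₀]) 0 fun j => ?_ using 2
  · simp [← Matrix.ext_iff, Fin.forall_fin_succ, tCoeff₀_re, tCoeff₁_re]
  · simp [← Matrix.ext_iff, Fin.forall_fin_succ, tCoeff₀_im, tCoeff₁_im]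
  · simp [← Matrix.ext_iff, Fin.forall_fin_succ, tCoeff₀_im, tCoeff₁_im]
  · simp [← Matrix.ext_iff, Fin.forall_fin_succ, tCoeff₀_re, tCoeff₁_re]
  · fin_cases j <;>
      simp [pauli, Tmat, Xmat, Zmat, pow_two, Fin.sum_univ_four, tCoeff₀, tCoeff₁] <;>
      grind

/-! ### Integral matrices and their residues -/

section Residue

variable {K k : Type*} [CommRing K] [CommRing k] {O : Subring K} (ρ : O →+* k)
variable {l m n o : Type*}

/-- `HasResidue ρ A r` says that `A` has entries in the subring `O` and that `r` is its entrywise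
image under `ρ : O →+* k`. -/
def HasResidue (A : Matrix m n K) (r : Matrix m n k) : Prop :=
  ∃ W : Matrix m n O, W.map O.subtype = A ∧ W.map ρ = r

namespace HasResidue

variable {ρ}

lemma map (W : Matrix m n O) : HasResidue ρ (W.map O.subtype) (W.map ρ) :=
  ⟨W, rfl, rfl⟩

lemma one [DecidableEq m] : HasResidue ρ (1 : Matrix m m K) 1 :=
  ⟨1, Matrix.map_one _ (map_zero _) (map_one _), Matrix.map_one _ (map_zero _) (map_one _)⟩

lemma zero : HasResidue ρ (0 : Matrix m n K) 0 :=
  ⟨0, Matrix.map_zero _ (map_zero _), Matrix.map_zero _ (map_zero _)⟩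

lemma mul [Fintype m] {A : Matrix l m K} {B : Matrix m n K} {r : Matrix l m k}
    {s : Matrix m n k} (hA : HasResidue ρ A r) (hB : HasResidue ρ B s) :
    HasResidue ρ (A * B) (r * s) := by
  obtain ⟨W, rfl, rfl⟩ := hA
  obtain ⟨W', rfl, rfl⟩ := hB
  exact ⟨W * W', Matrix.map_mul, Matrix.map_mul⟩

lemma smul_of_map_eq_zero {x : O} (hx : ρ x = 0) (W : Matrix m n O) :
    HasResidue ρ ((x : K) • W.map O.subtype) 0 :=
  ⟨x • W, by ext; simp, by ext; simp [hx]⟩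

lemma fromBlocks {A : Matrix l n K} {B : Matrix l o K} {C : Matrix m n K} {D : Matrix m o K}
    {a : Matrix l n k} {b : Matrix l o k} {c : Matrix m n k} {d : Matrix m o k}
    (hA : HasResidue ρ A a) (hB : HasResidue ρ B b) (hC : HasResidue ρ C c)
    (hD : HasResidue ρ D d) :
    HasResidue ρ (Matrix.fromBlocks A B C D) (Matrix.fromBlocks a b c d) := by
  obtain ⟨W₁₁, rfl, rfl⟩ := hA
  obtain ⟨W₁₂, rfl, rfl⟩ := hB
  obtain ⟨W₂₁, rfl, rfl⟩ := hC
  obtain ⟨W₂₂, rfl, rfl⟩ := hD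
  exact ⟨.fromBlocks W₁₁ W₁₂ W₂₁ W₂₂, Matrix.fromBlocks_map .., Matrix.fromBlocks_map ..⟩

lemma toBlocks₁₁ {A : Matrix (l ⊕ m) (n ⊕ o) K} {r : Matrix (l ⊕ m) (n ⊕ o) k}
    (hA : HasResidue ρ A r) : HasResidue ρ A.toBlocks₁₁ r.toBlocks₁₁ := by
  obtain ⟨W, rfl, rfl⟩ := hA
  exact ⟨W.toBlocks₁₁, rfl, rfl⟩

lemma toBlocks₂₁ {A : Matrix (l ⊕ m) (n ⊕ o) K} {r : Matrix (l ⊕ m) (n ⊕ o) k}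
    (hA : HasResidue ρ A r) : HasResidue ρ A.toBlocks₂₁ r.toBlocks₂₁ := by
  obtain ⟨W, rfl, rfl⟩ := hA
  exact ⟨W.toBlocks₂₁, rfl, rfl⟩

end HasResidue

end Residue

/-- The generator `α` of the kernel of the residue map. -/
def alphaZα : Zα := ⟨αR, alpha_mem_Zα⟩

/-- The element `1/2` of `ℤ[α]`. -/
def halfZα : Zα := ⟨1 / 2, Subring.subset_closure (by simp)⟩

/-- The parameter `β` as an element of `ℤ[α]`. -/
def betaZα : Zα := 4 * alphaZα ^ 2

lemma map_halfZα (ρ : Zα →+* ZMod 3) : ρ halfZα = 2 := by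
  have h_double : 2 * ρ halfZα = 1 := by
    rw [← map_ofNat ρ 2, ← map_mul, ← map_one ρ]
    exact congrArg ρ (Subtype.ext (mul_one_div_cancel two_ne_zero))
  grind

variable {ρ : Zα →+* ZMod 3}

lemma map_betaZα (hρ : ρ ⟨αR, alpha_mem_Zα⟩ = 0) : ρ betaZα = 0 := by
  rw [betaZα, map_mul, map_pow, alphaZα, hρ]
  ring

namespace HasResidue

variable {A : Matrix (Fin 4) (Fin 4) ℝ} {r : Matrix (Fin 4) (Fin 4) (ZMod 3)} {k : ℕ}

lemma mem_Zα (h : HasResidue ρ (αR ^ k • A) r) (i j : Fin 4) : αR ^ k * A i j ∈ Zα := by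
  obtain ⟨W, h_lift, -⟩ := h
  have h_entry : (W i j : ℝ) = αR ^ k * A i j := congrFun₂ h_lift i j
  exact h_entry ▸ (W i j).2

lemma resMat_eq (h : HasResidue ρ (αR ^ k • A) r) : resMat ρ k A = r := by
  ext i j
  rw [resMat, Matrix.of_apply, resEntry, dif_pos (h.mem_Zα i j)]
  obtain ⟨W, h_lift, rfl⟩ := h
  exact congrArg ρ (Subtype.ext (congrFun₂ h_lift i j).symm)

end HasResidue

/-! ### Clifford operators -/

/-- The shape of `Û` for a Clifford operator `U`: it has entries in `ℤ[α]`, and those of its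
off-diagonal blocks are divisible by `√3`. -/
def cliffordShape (P E F N : Matrix (Fin 4) (Fin 4) Zα) :
    Matrix (Fin 4 ⊕ Fin 4) (Fin 4 ⊕ Fin 4) ℝ :=
  fromBlocks (P.map Zα.subtype) (√3 • E.map Zα.subtype) (√3 • F.map Zα.subtype)
    (N.map Zα.subtype)

lemma cliffordShape_mul (P E F N P' E' F' N' : Matrix (Fin 4) (Fin 4) Zα) :
    cliffordShape P E F N * cliffordShape P' E' F' N' =
      cliffordShape (P * P' + (3 : Zα) • (E * F')) (P * E' + E * N') (F * P' + N * F')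
        ((3 : Zα) • (F * E') + N * N') := by
  have h_sq : √3 * √3 = 3 := Real.mul_self_sqrt (by norm_num)
  have h_map_smul (W : Matrix (Fin 4) (Fin 4) Zα) :
      ((3 : Zα) • W).map Zα.subtype = (3 : ℝ) • W.map Zα.subtype :=
    Matrix.ext fun _ _ => rfl
  simp only [cliffordShape, fromBlocks_multiply, Matrix.map_add _ (map_add Zα.subtype),
    Matrix.map_mul, Matrix.smul_mul, Matrix.mul_smul, smul_smul, h_sq, h_map_smul, smul_add]

lemma cliffordShape_transpose (P E F N : Matrix (Fin 4) (Fin 4) Zα) :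
    (cliffordShape P E F N)ᵀ = cliffordShape Pᵀ Fᵀ Eᵀ Nᵀ := by
  simp only [cliffordShape, fromBlocks_transpose, Matrix.transpose_smul, Matrix.transpose_map]

lemma exists_isAdjRep_S : ∃ P E F N, IsAdjRep Smat (cliffordShape P E F N) := by
  refine ⟨!![1, 0, 0, 0; 0, 0, 0, 1; 0, 1, 0, 0; 0, 0, 1, 0], 0, 0,
    !![1, 0, 0, 0; 0, 0, 0, 1; 0, 1, 0, 0; 0, 0, 1, 0], ?_⟩
  convert isAdjRep_S
  rw [cliffordShape]
  congr 1 <;> ext i j <;> fin_cases i <;> fin_cases j <;> simp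

lemma exists_isAdjRep_H : ∃ P E F N, IsAdjRep Hmat (cliffordShape P E F N) := by
  refine ⟨!![0, 1, 0, 0; 1, 0, 0, 0; 0, 0, 0, -halfZα; 0, 0, 1, 0],
    !![0, 0, 0, 0; 0, 0, 0, 0; 0, 0, 0, -halfZα; 0, 0, 0, 0],
    !![0, 0, 0, 0; 0, 0, 0, 0; 0, 0, 0, halfZα; 0, 0, 0, 0],
    !![0, 1, 0, 0; -1, 0, 0, 0; 0, 0, 0, -halfZα; 0, 0, -1, 0], ?_⟩
  convert isAdjRep_H
  rw [cliffordShape]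
  congr 1 <;> ext i j <;> fin_cases i <;> fin_cases j <;> simp [halfZα] <;> ring

lemma exists_isAdjRep_of_mem_Cliff {c : GL (Fin 3) ℂ} (hc : c ∈ Cliff) :
    ∃ P E F N, IsAdjRep c (cliffordShape P E F N) := by
  induction hc using Subgroup.closure_induction with
  | mem g hg =>
    obtain rfl | rfl := hg
    · exact exists_isAdjRep_H
    · exact exists_isAdjRep_S
  | one =>
    have h_one : cliffordShape 1 0 0 1 = 1 := by simp [cliffordShape]
    exact ⟨1, 0, 0, 1, h_one ▸ IsAdjRep.one⟩
  | mul g h _ _ hg hh =>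
    obtain ⟨P, E, F, N, hg⟩ := hg
    obtain ⟨P', E', F', N', hh⟩ := hh
    exact ⟨_, _, _, _, cliffordShape_mul P E F N P' E' F' N' ▸ hg.mul hh⟩
  | inv g _ hg =>
    obtain ⟨P, E, F, N, hg⟩ := hg
    have h_inv : ((g⁻¹ : GL (Fin 3) ℂ) : Matrix (Fin 3) (Fin 3) ℂ) = (g : Matrix _ _ ℂ)ᴴ := by
      rw [Matrix.coe_units_inv]
      exact Matrix.inv_eq_left_inv hg.conjTranspose_mul_self
    exact ⟨_, _, _, _, h_inv ▸ cliffordShape_transpose P E F N ▸ hg.conjTranspose⟩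

lemma LMset_subset_Cliff : LMset ⊆ Cliff := by
  have hH : Hg ∈ Cliff := Subgroup.subset_closure (by simp)
  have hS : Sg ∈ Cliff := Subgroup.subset_closure (by simp)
  rintro M (rfl | rfl | rfl | rfl | rfl | rfl | rfl | rfl)
  exacts [one_mem _, hH, pow_mem hH 2, pow_mem hH 3, mul_mem hS hH, mul_mem hS (pow_mem hH 3),
    mul_mem (pow_mem hS 2) hH, mul_mem (pow_mem hS 2) (pow_mem hH 3)]

/-! ### The invariant lattice -/

/-- The lower right block of `latticeBasis`, up to the scalar `α⁻¹`; at `Y = 0` it is its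
residue. -/
def latticeBasisMinus {R : Type*} [CommRing R] (Y : R) : Matrix (Fin 4) (Fin 4) R :=
  !![1, 0, 0, 0; 0, 1, 0, 0; 1, 1, Y ^ 2, 0; -1, 1, 0, Y ^ 2]

/-- The columns of `latticeBasis` span a lattice that is stable under `α²T̂` and under the
adjoint representations of Clifford operators. -/
def latticeBasis : Matrix (Fin 4 ⊕ Fin 4) (Fin 4 ⊕ Fin 4) ℝ :=
  fromBlocks 1 0 0 (αR⁻¹ • latticeBasisMinus βR)

/-- `HasLatticeRep ρ U k w` says that `αᵏÛ` preserves the lattice spanned by `latticeBasis`, and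
that `w` is the residue of its matrix in that basis. -/
def HasLatticeRep (ρ : Zα →+* ZMod 3) (U : Matrix (Fin 3) (Fin 3) ℂ) (k : ℕ)
    (w : Matrix (Fin 4 ⊕ Fin 4) (Fin 4 ⊕ Fin 4) (ZMod 3)) : Prop :=
  ∃ A X, IsAdjRep U A ∧ HasResidue ρ X w ∧ αR ^ k • A * latticeBasis = latticeBasis * X

namespace HasLatticeRep

variable {U V : Matrix (Fin 3) (Fin 3) ℂ} {k l : ℕ}
  {v w : Matrix (Fin 4 ⊕ Fin 4) (Fin 4 ⊕ Fin 4) (ZMod 3)}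

lemma one : HasLatticeRep ρ 1 0 1 :=
  ⟨1, 1, .one, .one, by simp only [pow_zero, one_smul, Matrix.one_mul, Matrix.mul_one]⟩

lemma mul (hU : HasLatticeRep ρ U k v) (hV : HasLatticeRep ρ V l w) :
    HasLatticeRep ρ (U * V) (k + l) (v * w) := by
  obtain ⟨A, X, hA, hX, h_left⟩ := hU
  obtain ⟨A', X', hA', hX', h_right⟩ := hV
  refine ⟨A * A', X * X', hA.mul hA', hX.mul hX', ?_⟩
  rw [pow_add, ← smul_mul_smul_comm, Matrix.mul_assoc, h_right, ← Matrix.mul_assoc, h_left,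
    Matrix.mul_assoc]

lemma pow (hU : HasLatticeRep ρ U 0 w) (a : ℕ) : HasLatticeRep ρ (U ^ a) 0 (w ^ a) := by
  induction a with
  | zero => exact .one
  | succ a ih => exact ih.mul hU

end HasLatticeRep

lemma fromBlocks_mul_latticeBasis {A₁₁ A₁₂ A₂₁ A₂₂ X₁₁ X₁₂ X₂₁ X₂₂ : Matrix (Fin 4) (Fin 4) ℝ}
    (h₁₁ : A₁₁ = X₁₁) (h₁₂ : A₁₂ * latticeBasisMinus βR = αR • X₁₂)
    (h₂₁ : αR • A₂₁ = latticeBasisMinus βR * X₂₁)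
    (h₂₂ : A₂₂ * latticeBasisMinus βR = latticeBasisMinus βR * X₂₂) :
    fromBlocks A₁₁ A₁₂ A₂₁ A₂₂ * latticeBasis = latticeBasis * fromBlocks X₁₁ X₁₂ X₂₁ X₂₂ := by
  have h_cancel (W : Matrix (Fin 4) (Fin 4) ℝ) : αR⁻¹ • αR • W = W :=
    inv_smul_smul₀ alphaR_ne_zero W
  simp only [latticeBasis, fromBlocks_multiply, Matrix.mul_smul, Matrix.smul_mul, h₁₁, h₁₂,
    ← h₂₁, h₂₂, h_cancel, Matrix.mul_zero, Matrix.zero_mul, Matrix.mul_one, Matrix.one_mul,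
    add_zero, zero_add]

/-- The matrix of `Ŝ` in `latticeBasis`, for `Y = β`. -/
def latticeS {R : Type*} [CommRing R] (Y : R) : Matrix (Fin 4 ⊕ Fin 4) (Fin 4 ⊕ Fin 4) R :=
  fromBlocks !![1, 0, 0, 0; 0, 0, 0, 1; 0, 1, 0, 0; 0, 0, 1, 0] 0 0
    !![1, 0, 0, 0; -1, 1, 0, Y ^ 2; 0, 0, 0, -1; 3 * Y ^ 2 - 17 * Y + 21, 0, 1, -1]

/-- The matrix of `Ĥ` in `latticeBasis`, for `Y = β` and `h = 1/2`. -/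
def latticeH {R : Type*} [CommRing R] (Y h : R) : Matrix (Fin 4 ⊕ Fin 4) (Fin 4 ⊕ Fin 4) R :=
  fromBlocks !![0, 1, 0, 0; 1, 0, 0, 0; 0, 0, 0, -h; 0, 0, 1, 0]
    ((3 - Y) • !![0, 0, 0, 0; 0, 0, 0, 0; 1, -1, 0, -Y ^ 2; 0, 0, 0, 0])
    ((h ^ 2 * ((3 - Y) ^ 2 - 1)) • !![0, 0, 0, 0; 0, 0, 0, 0; 0, 0, 0, 1; 0, 0, 0, 0])
    !![0, 1, 0, 0; -1, 0, 0, 0;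
      h * (3 * Y ^ 2 - 17 * Y + 21), -h * (3 * Y ^ 2 - 17 * Y + 21), 0, -h; 0, 0, -1, 0]

/-- The matrix of `α²T̂` in `latticeBasis`, for `Y = β` and `h = 1/2`. -/
def latticeT {R : Type*} [CommRing R] (Y h : R) : Matrix (Fin 4 ⊕ Fin 4) (Fin 4 ⊕ Fin 4) R :=
  let p := -2 + 4 * Y - Y ^ 2
  let q := 1 - 3 * Y + Y ^ 2
  let k := Y ^ 2 - 4 * Y + 3
  let l := Y ^ 2 - 5 * Y + 5
  let m := (1 - Y) ^ 2
  h ^ 3 • fromBlocks !![2 * Y, 0, 0, 0; 0, p, p, q; 0, q, p, p; 0, p, q, p]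
    ((-2 : R) • !![0, 0, 0, 0; k, Y, Y * m, Y * p; 0, Y, Y * m, Y * m; -k, Y, Y * p, Y * m])
    (h • !![0, 0, 0, 0; 0, m, m, p; 0, -l, 0, l; 0, 0, -l, l])
    !![2 * Y, 0, 0, 0; p - q, 2 * p + q, Y ^ 2 * p, Y ^ 2 * q; Y - 4, 0, 0, Y * p;
      2 * l, 0, -Y * p, Y * p]

lemma latticeBasisMinus_map {R R' : Type*} [CommRing R] [CommRing R'] (f : R →+* R') (Y : R) :
    (latticeBasisMinus Y).map f = latticeBasisMinus (f Y) := by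
  simp [latticeBasisMinus, ← Matrix.ext_iff, Fin.forall_fin_succ]

lemma latticeS_map {R R' : Type*} [CommRing R] [CommRing R'] (f : R →+* R') (Y : R) :
    (latticeS Y).map f = latticeS (f Y) := by
  rw [latticeS, latticeS, fromBlocks_map]
  congr 1 <;> simp [map_ofNat f, ← Matrix.ext_iff, Fin.forall_fin_succ]

lemma latticeH_map {R R' : Type*} [CommRing R] [CommRing R'] (f : R →+* R') (Y h : R) :
    (latticeH Y h).map f = latticeH (f Y) (f h) := by
  rw [latticeH, latticeH, fromBlocks_map]
  congr 1 <;> simp [map_ofNat f, ← Matrix.ext_iff, Fin.forall_fin_succ]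

lemma latticeT_map {R R' : Type*} [CommRing R] [CommRing R'] (f : R →+* R') (Y h : R) :
    (latticeT Y h).map f = latticeT (f Y) (f h) := by
  simp only [latticeT, fromBlocks_map, fromBlocks_smul]
  congr 1 <;> simp [map_ofNat f, ← Matrix.ext_iff, Fin.forall_fin_succ]

lemma hasResidue_latticeBasisMinus (hρ : ρ ⟨αR, alpha_mem_Zα⟩ = 0) :
    HasResidue ρ (latticeBasisMinus βR) (latticeBasisMinus 0) :=
  ⟨latticeBasisMinus betaZα, latticeBasisMinus_map _ _, by
    rw [latticeBasisMinus_map, map_betaZα hρ]⟩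

lemma hasResidue_latticeS (hρ : ρ ⟨αR, alpha_mem_Zα⟩ = 0) :
    HasResidue ρ (latticeS βR) (latticeS 0) :=
  ⟨latticeS betaZα, latticeS_map _ _, by rw [latticeS_map, map_betaZα hρ]⟩

lemma hasResidue_latticeH (hρ : ρ ⟨αR, alpha_mem_Zα⟩ = 0) :
    HasResidue ρ (latticeH βR (1 / 2)) (latticeH 0 2) :=
  ⟨latticeH betaZα halfZα, latticeH_map _ _ _, by
    rw [latticeH_map, map_betaZα hρ, map_halfZα]⟩

lemma hasResidue_latticeT (hρ : ρ ⟨αR, alpha_mem_Zα⟩ = 0) :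
    HasResidue ρ (latticeT βR (1 / 2)) (latticeT 0 2) :=
  ⟨latticeT betaZα halfZα, latticeT_map _ _ _, by
    rw [latticeT_map, map_betaZα hρ, map_halfZα]⟩

lemma hasLatticeRep_S (hρ : ρ ⟨αR, alpha_mem_Zα⟩ = 0) :
    HasLatticeRep ρ Smat 0 (latticeS 0) := by
  have h_cubic := betaR_cubic
  refine ⟨_, _, isAdjRep_S, hasResidue_latticeS hρ, ?_⟩
  rw [pow_zero, one_smul, latticeS]
  apply fromBlocks_mul_latticeBasis <;>
    simp [latticeBasisMinus, funext_iff, Fin.forall_fin_succ]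
  grind

lemma hasLatticeRep_H (hρ : ρ ⟨αR, alpha_mem_Zα⟩ = 0) :
    HasLatticeRep ρ Hmat 0 (latticeH 0 2) := by
  have h_cubic := betaR_cubic
  have h_sqrt := sqrt_three_eq
  have h_beta : βR = 4 * αR ^ 2 := rfl
  refine ⟨_, _, isAdjRep_H, hasResidue_latticeH hρ, ?_⟩
  rw [pow_zero, one_smul, latticeH]
  apply fromBlocks_mul_latticeBasis <;>
    simp [latticeBasisMinus, funext_iff, Fin.forall_fin_succ] <;>
    grind

lemma hasLatticeRep_T (hρ : ρ ⟨αR, alpha_mem_Zα⟩ = 0) :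
    HasLatticeRep ρ Tmat 2 (latticeT 0 2) := by
  have h_cubic := betaR_cubic
  have h_sq : αR ^ 2 = βR / 4 := by rw [βR]; ring
  refine ⟨_, _, isAdjRep_T, hasResidue_latticeT hρ, ?_⟩
  simp only [latticeT, fromBlocks_smul]
  apply fromBlocks_mul_latticeBasis <;>
    simp [latticeBasisMinus, h_sq, funext_iff, Fin.forall_fin_succ] <;>
    grind

/-! ### Residues of canonical forms -/

/-- The matrix `diag(1, α)`, which clears the denominator `α` of `latticeBasis`. -/
def alphaDiag : Matrix (Fin 4 ⊕ Fin 4) (Fin 4 ⊕ Fin 4) ℝ := fromBlocks 1 0 0 (αR • 1)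

lemma alphaDiag_mul_latticeBasis :
    alphaDiag * latticeBasis = fromBlocks 1 0 0 (latticeBasisMinus βR) := by
  simp [alphaDiag, latticeBasis, fromBlocks_multiply, smul_smul, alphaR_ne_zero]

/-- The residue of `alphaDiag * latticeBasis * latticeT β (1/2)`, that is, of `α²T̂` after rescaling
the rows by `diag(1, α)` and passing to `latticeBasis` in the columns. -/
def tResidue : Matrix (Fin 4 ⊕ Fin 4) (Fin 4 ⊕ Fin 4) (ZMod 3) := fromBlocks J2 0 J1 0

lemma fromBlocks_latticeBasisMinus_mul_latticeT :
    fromBlocks 1 0 0 (latticeBasisMinus 0) * latticeT 0 2 = tResidue := by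
  decide

lemma tResidue_mul_latticeS : tResidue * latticeS 0 = tResidue := by
  decide

lemma tResidue_mul_latticeH_mul_latticeT :
    tResidue * (latticeH 0 2 * latticeT 0 2) = tResidue := by
  decide

lemma tResidue_mul_latticeH_pow_three_mul_latticeT :
    tResidue * (latticeH 0 2 ^ 3 * latticeT 0 2) = tResidue := by
  decide

lemma tResidue_mul_latticeS_pow (a : ℕ) : tResidue * latticeS 0 ^ a = tResidue := by
  induction a with
  | zero => rw [pow_zero, Matrix.mul_one]
  | succ a ih => rw [pow_succ, ← Matrix.mul_assoc, ih, tResidue_mul_latticeS]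

lemma wordProd_append (u v : List Letter) : wordProd (u ++ v) = wordProd u * wordProd v := by
  simp only [wordProd, List.map_append, List.prod_append]

lemma exists_wordProd_syllable {s : List Letter} (hs : s ∈ Syllables) :
    ∃ a : ℕ, ∃ b ∈ ({1, 3} : Set ℕ), wordProd s = Sg ^ a * Hg ^ b * Tg := by
  rcases hs with rfl | rfl | rfl | rfl | rfl | rfl
  exacts [⟨0, 1, by simp, by simp [wordProd, Letter.g]⟩,
    ⟨0, 3, by simp, by simp [wordProd, Letter.g, pow_succ, mul_assoc]⟩,
    ⟨1, 1, by simp, by simp [wordProd, Letter.g, mul_assoc]⟩,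
    ⟨1, 3, by simp, by simp [wordProd, Letter.g, pow_succ, mul_assoc]⟩,
    ⟨2, 1, by simp, by simp [wordProd, Letter.g, pow_succ, mul_assoc]⟩,
    ⟨2, 3, by simp, by simp [wordProd, Letter.g, pow_succ, mul_assoc]⟩]

lemma hasLatticeRep_syllable (hρ : ρ ⟨αR, alpha_mem_Zα⟩ = 0) {s : List Letter}
    (hs : s ∈ Syllables) : ∃ w, HasLatticeRep ρ (wordProd s) 2 w ∧ tResidue * w = tResidue := by
  have hS := hasLatticeRep_S hρ
  have hH := hasLatticeRep_H hρ
  have hT := hasLatticeRep_T hρ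
  obtain ⟨a, b, hb, h_word⟩ := exists_wordProd_syllable hs
  refine ⟨latticeS 0 ^ a * latticeH 0 2 ^ b * latticeT 0 2, ?_, ?_⟩
  · simp only [h_word, Units.val_mul, Units.val_pow_eq_pow_val]
    exact ((hS.pow a).mul (hH.pow b)).mul hT
  · rw [Matrix.mul_assoc, ← Matrix.mul_assoc, tResidue_mul_latticeS_pow]
    rcases hb with rfl | rfl
    · rw [pow_one, tResidue_mul_latticeH_mul_latticeT]
    · exact tResidue_mul_latticeH_pow_three_mul_latticeT

lemma hasLatticeRep_syllables (hρ : ρ ⟨αR, alpha_mem_Zα⟩ = 0) {ss : List (List Letter)}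
    (hss : ∀ s ∈ ss, s ∈ Syllables) :
    ∃ w, HasLatticeRep ρ (wordProd ss.flatten) (2 * ss.length) w ∧ tResidue * w = tResidue := by
  induction ss with
  | nil => exact ⟨1, .one, Matrix.mul_one _⟩
  | cons s ss ih =>
    obtain ⟨v, hv, h_fix_v⟩ := hasLatticeRep_syllable hρ (hss s List.mem_cons_self)
    obtain ⟨w, hw, h_fix_w⟩ := ih fun t ht => hss t (List.mem_cons_of_mem s ht)
    refine ⟨v * w, ?_, by rw [← Matrix.mul_assoc, h_fix_v, h_fix_w]⟩
    rw [List.flatten_cons, wordProd_append, List.length_cons, mul_add, mul_one, add_comm]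
    exact hv.mul hw

lemma hasLatticeRep_T_mul_syllables (hρ : ρ ⟨αR, alpha_mem_Zα⟩ = 0) {ss : List (List Letter)}
    (hss : ∀ s ∈ ss, s ∈ Syllables) :
    ∃ w, HasLatticeRep ρ (Tg * wordProd ss.flatten : GL (Fin 3) ℂ) (2 * (ss.length + 1)) w ∧
      fromBlocks 1 0 0 (latticeBasisMinus 0) * w = tResidue := by
  obtain ⟨w, hw, h_fix⟩ := hasLatticeRep_syllables hρ hss
  refine ⟨latticeT 0 2 * w, ?_, ?_⟩
  · rw [mul_add_one, add_comm]
    exact (hasLatticeRep_T hρ).mul hw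
  · rw [← Matrix.mul_assoc, fromBlocks_latticeBasisMinus_mul_latticeT, h_fix]

lemma coe_halfZα_mul_betaZα_mul :
    ((halfZα * betaZα * (3 - betaZα) : Zα) : ℝ) = αR * √3 := by
  rw [sqrt_three_eq]
  change 1 / 2 * (4 * αR ^ 2) * (3 - βR) = _
  ring

lemma exists_alphaDiag_mul_cliffordShape (hρ : ρ ⟨αR, alpha_mem_Zα⟩ = 0)
    (P E F N : Matrix (Fin 4) (Fin 4) Zα) :
    ∃ X, HasResidue ρ X (fromBlocks (P.map ρ) 0 0 (N.map ρ)) ∧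
      alphaDiag * cliffordShape P E F N = X * alphaDiag := by
  have h_beta := map_betaZα hρ
  have h_upper : ρ (2 * (3 - betaZα)) = 0 := by
    rw [map_mul, map_sub, map_ofNat, map_ofNat, h_beta]
    decide
  have h_lower : ρ (halfZα * betaZα * (3 - betaZα)) = 0 := by
    rw [map_mul, map_mul, h_beta, mul_zero, zero_mul]
  refine ⟨_, .fromBlocks (.map P) (.smul_of_map_eq_zero h_upper E)
    (.smul_of_map_eq_zero h_lower F) (.map N), ?_⟩
  have h_div : (2 * (3 - betaZα) : Zα) * αR = √3 := by
    rw [sqrt_three_eq, mul_right_comm]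
    rfl
  simp only [alphaDiag, cliffordShape, fromBlocks_multiply, Matrix.smul_mul, Matrix.mul_smul,
    Matrix.one_mul, Matrix.mul_one, Matrix.zero_mul, Matrix.mul_zero, add_zero, zero_add,
    smul_smul, coe_halfZα_mul_betaZα_mul, mul_comm αR, h_div, smul_zero]

/-- The adjugate of `latticeBasisMinus Y`, divided by `Y ^ 2`. -/
def latticeBasisMinusAdj {R : Type*} [CommRing R] (Y : R) : Matrix (Fin 4) (Fin 4) R :=
  !![Y ^ 2, 0, 0, 0; 0, Y ^ 2, 0, 0; -1, -1, 1, 0; 1, -1, 0, 1]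

lemma latticeBasisMinus_mul_adj {R : Type*} [CommRing R] (Y : R) :
    latticeBasisMinus Y * latticeBasisMinusAdj Y = Y ^ 2 • 1 := by
  simp [latticeBasisMinus, latticeBasisMinusAdj, ← Matrix.ext_iff, Fin.forall_fin_succ,
    Matrix.one_apply]

lemma exists_latticeBasisMinus_mul (F : Matrix (Fin 4) (Fin 4) Zα) :
    ∃ K : Matrix (Fin 4) (Fin 4) Zα,
      latticeBasisMinus βR * K.map Zα.subtype = αR • √3 • F.map Zα.subtype := by
  have h_cubic : betaZα ^ 3 - 6 * betaZα ^ 2 + 9 * betaZα - 3 = 0 := Subtype.ext betaR_cubic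
  have h_coeff : halfZα * ((3 - betaZα) ^ 2 - 1) * betaZα ^ 2 =
      halfZα * betaZα * (3 - betaZα) := by
    linear_combination halfZα * betaZα * h_cubic
  let K := (halfZα * ((3 - betaZα) ^ 2 - 1)) • (latticeBasisMinusAdj betaZα * F)
  have h_lift : latticeBasisMinus betaZα * K = (halfZα * betaZα * (3 - betaZα)) • F := by
    rw [Matrix.mul_smul, ← Matrix.mul_assoc, latticeBasisMinus_mul_adj, Matrix.smul_mul,
      Matrix.one_mul, smul_smul, h_coeff]
  refine ⟨K, ?_⟩
  have h_map : (latticeBasisMinus betaZα).map Zα.subtype = latticeBasisMinus βR :=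
    latticeBasisMinus_map _ _
  rw [← h_map, ← Matrix.map_mul, h_lift, smul_smul, ← coe_halfZα_mul_betaZα_mul]
  rfl

lemma exists_cliffordShape_mul_fromBlocks_one (P E F N : Matrix (Fin 4) (Fin 4) Zα) :
    ∃ X r, HasResidue ρ X (fromBlocks (P.map ρ) 0 r 0) ∧
      cliffordShape P E F N * fromBlocks 1 0 0 0 = latticeBasis * X := by
  obtain ⟨K, hK⟩ := exists_latticeBasisMinus_mul F
  refine ⟨_, _, .fromBlocks (.map P) .zero (.map K) .zero, ?_⟩
  simp only [cliffordShape, latticeBasis, fromBlocks_multiply, Matrix.smul_mul, hK,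
    inv_smul_smul₀ alphaR_ne_zero, Matrix.one_mul, Matrix.mul_one, Matrix.zero_mul,
    Matrix.mul_zero, add_zero, zero_add]

lemma IsAdjRep.resMat_blockPP {U : Matrix (Fin 3) (Fin 3) ℂ} {P E F N : Matrix (Fin 4) (Fin 4) Zα}
    (hU : IsAdjRep U (cliffordShape P E F N)) : resMat ρ 0 (blockPP (adj U)) = P.map ρ := by
  rw [hU.blockPP_adj]
  exact HasResidue.resMat_eq ⟨P, by rw [pow_zero, one_smul]; rfl, rfl⟩

lemma IsAdjRep.resMat_blockMM {U : Matrix (Fin 3) (Fin 3) ℂ} {P E F N : Matrix (Fin 4) (Fin 4) Zα}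
    (hU : IsAdjRep U (cliffordShape P E F N)) : resMat ρ 0 (blockMM (adj U)) = N.map ρ := by
  rw [hU.blockMM_adj]
  exact HasResidue.resMat_eq ⟨N, by rw [pow_zero, one_smul]; rfl, rfl⟩

lemma alphaDiag_mul_mul_fromBlocks_one (A : Matrix (Fin 4 ⊕ Fin 4) (Fin 4 ⊕ Fin 4) ℝ) :
    alphaDiag * A * fromBlocks 1 0 0 0 =
      fromBlocks A.toBlocks₁₁ 0 (αR • A.toBlocks₂₁) 0 := by
  conv_lhs => rw [← fromBlocks_toBlocks A]
  simp only [alphaDiag, fromBlocks_multiply, Matrix.smul_mul, Matrix.one_mul, Matrix.mul_one,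
    Matrix.zero_mul, Matrix.mul_zero, add_zero, zero_add]

lemma HasLatticeRep.hasResidue_mul_mul (hρ : ρ ⟨αR, alpha_mem_Zα⟩ = 0) {m g c : GL (Fin 3) ℂ}
    (hm : m ∈ Cliff) (hc : c ∈ Cliff) {k : ℕ}
    {w : Matrix (Fin 4 ⊕ Fin 4) (Fin 4 ⊕ Fin 4) (ZMod 3)} (hg : HasLatticeRep ρ g k w)
    (hw : fromBlocks 1 0 0 (latticeBasisMinus 0) * w = tResidue) :
    ∃ A, IsAdjRep (m * g * c : GL (Fin 3) ℂ) A ∧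
      HasResidue ρ (alphaDiag * αR ^ k • A * fromBlocks 1 0 0 0)
        (fromBlocks (resMat ρ 0 (blockPP (adj m)) * J2 * resMat ρ 0 (blockPP (adj c))) 0
          (resMat ρ 0 (blockMM (adj m)) * J1 * resMat ρ 0 (blockPP (adj c))) 0) := by
  obtain ⟨P, E, F, N, h_m⟩ := exists_isAdjRep_of_mem_Cliff hm
  obtain ⟨P', E', F', N', h_c⟩ := exists_isAdjRep_of_mem_Cliff hc
  obtain ⟨A, X, h_g, hX, h_lattice⟩ := hg
  obtain ⟨L, hL, h_left⟩ := exists_alphaDiag_mul_cliffordShape hρ P E F N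
  obtain ⟨R, r, hR, h_right⟩ := exists_cliffordShape_mul_fromBlocks_one (ρ := ρ) P' E' F' N'
  refine ⟨_, (h_m.mul h_g).mul h_c, ?_⟩
  have h_factor : alphaDiag * αR ^ k • (cliffordShape P E F N * A * cliffordShape P' E' F' N') *
      fromBlocks 1 0 0 0 = L * (fromBlocks 1 0 0 (latticeBasisMinus βR) * X) * R := by
    rw [← alphaDiag_mul_latticeBasis]
    calc _ = alphaDiag * cliffordShape P E F N * (αR ^ k • A) *
          (cliffordShape P' E' F' N' * fromBlocks 1 0 0 0) := by
          simp only [Matrix.mul_assoc, Matrix.mul_smul, Matrix.smul_mul]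
      _ = L * alphaDiag * (αR ^ k • A * latticeBasis) * R := by
          rw [h_left, h_right]
          simp only [Matrix.mul_assoc]
      _ = L * (alphaDiag * latticeBasis * X) * R := by
          rw [h_lattice]
          simp only [Matrix.mul_assoc]
  have h_residue := (hL.mul ((HasResidue.fromBlocks .one .zero .zero
    (hasResidue_latticeBasisMinus hρ)).mul hX)).mul hR
  rw [hw, tResidue] at h_residue
  rw [h_factor, h_m.resMat_blockPP, h_m.resMat_blockMM, h_c.resMat_blockPP]
  simpa only [fromBlocks_multiply, Matrix.mul_zero, Matrix.zero_mul, add_zero, zero_add]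
    using h_residue

lemma HasLatticeRep.hasResidue_blocks (hρ : ρ ⟨αR, alpha_mem_Zα⟩ = 0) {m g c : GL (Fin 3) ℂ}
    (hm : m ∈ Cliff) (hc : c ∈ Cliff) {k : ℕ}
    {w : Matrix (Fin 4 ⊕ Fin 4) (Fin 4 ⊕ Fin 4) (ZMod 3)} (hg : HasLatticeRep ρ g k w)
    (hw : fromBlocks 1 0 0 (latticeBasisMinus 0) * w = tResidue) :
    HasResidue ρ (αR ^ k • blockPP (adj (m * g * c : GL (Fin 3) ℂ)))
        (resMat ρ 0 (blockPP (adj m)) * J2 * resMat ρ 0 (blockPP (adj c))) ∧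
      HasResidue ρ (αR ^ (k + 1) • blockMP (adj (m * g * c : GL (Fin 3) ℂ)))
        (resMat ρ 0 (blockMM (adj m)) * J1 * resMat ρ 0 (blockPP (adj c))) := by
  obtain ⟨A, hA, h_residue⟩ := hg.hasResidue_mul_mul hρ hm hc hw
  rw [alphaDiag_mul_mul_fromBlocks_one] at h_residue
  rw [hA.blockPP_adj, hA.blockMP_adj, pow_succ', mul_smul]
  exact ⟨h_residue.toBlocks₁₁, h_residue.toBlocks₂₁⟩

lemma exists_wordProd_canonicalForm {p : List Letter} {ss : List (List Letter)}
    {M : GL (Fin 3) ℂ} (hp : p ∈ Prefixes) (hss : ∀ s ∈ ss, s ∈ Syllables)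
    (hM : (p ≠ [] ∧ M = wordProd p.dropLast) ∨
      (p = [] ∧ ∃ s rest, ss = s :: rest ∧ M = wordProd s.dropLast)) :
    ∃ rest : List (List Letter), (∀ s ∈ rest, s ∈ Syllables) ∧ TCount p ss = rest.length + 1 ∧
      wordProd (p ++ ss.flatten) = M * (Tg * wordProd rest.flatten) := by
  have h_block {w : List Letter} (h_last : w.dropLast ++ [.T] = w) (v : List Letter) :
      wordProd (w ++ v) = wordProd w.dropLast * (Tg * wordProd v) := by
    rw [← h_last, wordProd_append, wordProd_append, List.dropLast_concat, mul_assoc]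
    simp [wordProd, Letter.g]
  rcases hM with ⟨h_ne, rfl⟩ | ⟨rfl, s, rest, rfl, rfl⟩
  · refine ⟨ss, hss, by rw [TCount, if_neg h_ne], h_block ?_ _⟩
    rcases hp with rfl | rfl | rfl
    exacts [absurd rfl h_ne, rfl, rfl]
  · refine ⟨rest, fun t ht => hss t (List.mem_cons_of_mem s ht), rfl, ?_⟩
    rw [List.nil_append, List.flatten_cons]
    refine h_block ?_ _
    rcases hss s List.mem_cons_self with rfl | rfl | rfl | rfl | rfl | rfl <;> rfl

/-- Let U be the product of a canonical form with T-count n ≥ 1,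
whose leftmost T-gate block has Clifford prefix M ∈ ℒℳ, and whose final Clifford
element is c ∈ 𝒞. Then ρ_{2n}(Û₊₊) = ρ₀(M̂₊₊)·J₂·ρ₀(ĉ₊₊) and
ρ_{2n+1}(Û₋₊) = ρ₀(M̂₋₋)·J₁·ρ₀(ĉ₊₊), where ρ : ℤ[α] → ℤ/3ℤ is the residue map
(the quotient map by the ideal (α) followed by the isomorphism ℤ[α]/(α) ≅ ℤ/3ℤ;
equivalently, any ring homomorphism ℤ[α] → ℤ/3ℤ sending α to 0). -/
theorem residues_of_canonical_form
    (ρ : Zα →+* ZMod 3) (hρ : ρ (⟨αR, alpha_mem_Zα⟩ : Zα) = 0)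
    (p : List Letter) (ss : List (List Letter)) (c : GL (Fin 3) ℂ)
    (hp : p ∈ Prefixes) (hss : ∀ s ∈ ss, s ∈ Syllables) (hc : c ∈ Cliff)
    (U : GL (Fin 3) ℂ) (hU : U = wordProd (p ++ ss.flatten) * c)
    (n : ℕ) (hn : n = TCount p ss) (hn1 : 1 ≤ n)
    (M : GL (Fin 3) ℂ) (hM : M ∈ LMset)
    (hMpre : (p ≠ [] ∧ M = wordProd p.dropLast) ∨
      (p = [] ∧ ∃ s rest, ss = s :: rest ∧ M = wordProd s.dropLast)) :
    (∀ i j : Fin 4, αR ^ (2 * n) * blockPP (adj (U : Matrix (Fin 3) (Fin 3) ℂ)) i j ∈ Zα) ∧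
    (∀ i j : Fin 4, αR ^ (2 * n + 1) * blockMP (adj (U : Matrix (Fin 3) (Fin 3) ℂ)) i j ∈ Zα) ∧
    resMat ρ (2 * n) (blockPP (adj (U : Matrix (Fin 3) (Fin 3) ℂ))) =
      resMat ρ 0 (blockPP (adj (M : Matrix (Fin 3) (Fin 3) ℂ))) * J2 *
      resMat ρ 0 (blockPP (adj (c : Matrix (Fin 3) (Fin 3) ℂ))) ∧
    resMat ρ (2 * n + 1) (blockMP (adj (U : Matrix (Fin 3) (Fin 3) ℂ))) =
      resMat ρ 0 (blockMM (adj (M : Matrix (Fin 3) (Fin 3) ℂ))) * J1 *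
      resMat ρ 0 (blockPP (adj (c : Matrix (Fin 3) (Fin 3) ℂ))) := by
  obtain ⟨rest, h_rest, h_count, h_word⟩ := exists_wordProd_canonicalForm hp hss hMpre
  obtain ⟨w, h_rep, h_fix⟩ := hasLatticeRep_T_mul_syllables hρ h_rest
  obtain ⟨hPP, hMP⟩ := h_rep.hasResidue_blocks hρ (LMset_subset_Cliff hM) hc h_fix
  rw [← h_word, ← hU, ← h_count, ← hn] at hPP hMP
  exact ⟨hPP.mem_Zα, hMP.mem_Zα, hPP.resMat_eq, hMP.resMat_eq⟩

end
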